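/- Let Δ ∈ 𝒟⁺, let U = {j_1,…,j_{k−1}} be any (k−1)-element subset of {1,…,N}, and let Re λ > 0. Then λ · ∫_Δ e^{−λ f_0(x)} (∏_{j=1}^N |f_j(x)|^{α_j}) · |det(f_0, l_{j_1},…,l_{j_{k−1}})| · (∏_{j∈U} f_j(x))^{−1} dx = Σ_{r ∉ U} sgn(l_r(e_U)) · α_r · I_{Δ, U∪{r}}(λ), where det(f_0, l_{j_1},…,l_{j_{k−1}}) is the determinant of the matrix whose rows are the linear forms f_0, l_{j_1},…,l_{j_{k−1}} in the standard coordinates, and the sum runs over all indices r ∈ {1,…,N} ∖ U. -/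

import Mathlib

open Set MeasureTheory Filter
open scoped Classical Real

noncomputable section

namespace HypArr

variable {k N : ℕ}

/-- The hyperplane `H j = f j ⁻¹ (0)` of the `j`-th affine form. -/
def Hyp (f : Fin N → ((Fin k → ℝ) →ᵃ[ℝ] ℝ)) (j : Fin N) : Set (Fin k → ℝ) :=
  {x | f j x = 0}

/-- The complement `ℝ^k ∖ (H 1 ∪ ⋯ ∪ H N)` of the union of all the hyperplanes. -/
def HypCompl (f : Fin N → ((Fin k → ℝ) →ᵃ[ℝ] ℝ)) : Set (Fin k → ℝ) :=
  {x | ∀ j, f j x ≠ 0}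

/-- `Δ` is an arrangement domain: a connected component of `ℝ^k ∖ (H 1 ∪ ⋯ ∪ H N)`. -/
def IsDomain (f : Fin N → ((Fin k → ℝ) →ᵃ[ℝ] ℝ)) (Δ : Set (Fin k → ℝ)) : Prop :=
  ∃ x ∈ HypCompl f, Δ = connectedComponentIn (HypCompl f) x

/-- The hyperplanes `H 1, …, H N` are in generic position in `ℝ^k`: they are pairwise
distinct, any `k` of them intersect in exactly one point, and any `k+1` of them have
empty intersection. -/
def Generic (f : Fin N → ((Fin k → ℝ) →ᵃ[ℝ] ℝ)) : Prop :=
  (∀ i j : Fin N, i ≠ j → Hyp f i ≠ Hyp f j) ∧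
  (∀ S : Finset (Fin N), S.card = k → ∃! x : Fin k → ℝ, ∀ j ∈ S, f j x = 0) ∧
  (∀ S : Finset (Fin N), S.card = k + 1 → ¬ ∃ x : Fin k → ℝ, ∀ j ∈ S, f j x = 0)

/-- `X` is a vertex of the arrangement. -/
def IsVertex (f : Fin N → ((Fin k → ℝ) →ᵃ[ℝ] ℝ)) (X : Fin k → ℝ) : Prop :=
  ∃ S : Finset (Fin N), S.card = k ∧ ∀ j ∈ S, f j X = 0

/-- `X` is the vertex of the arrangement with index set `S`. -/
def IsVertexOf (f : Fin N → ((Fin k → ℝ) →ᵃ[ℝ] ℝ)) (S : Finset (Fin N))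
    (X : Fin k → ℝ) : Prop :=
  S.card = k ∧ ∀ j ∈ S, f j X = 0

/-- The linear form `f0` is in general position with respect to the arrangement:
it takes pairwise distinct values at the vertices and is nonconstant on each
line `L_U = ∩_{j ∈ U} H j` for `U` of cardinality `k - 1`. -/
def GenericLin (f : Fin N → ((Fin k → ℝ) →ᵃ[ℝ] ℝ)) (f0 : (Fin k → ℝ) →ₗ[ℝ] ℝ) : Prop :=
  (∀ X Y : Fin k → ℝ, IsVertex f X → IsVertex f Y → X ≠ Y → f0 X ≠ f0 Y) ∧
  ∀ U : Finset (Fin N), U.card = k - 1 →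
    ∃ x y : Fin k → ℝ, (∀ j ∈ U, f j x = 0) ∧ (∀ j ∈ U, f j y = 0) ∧ f0 x ≠ f0 y

/-- `C` is a connected component of `ℝ^k ∖ ⋃_{j ∈ S} H j`. -/
def IsConeComp (f : Fin N → ((Fin k → ℝ) →ᵃ[ℝ] ℝ)) (S : Finset (Fin N))
    (C : Set (Fin k → ℝ)) : Prop :=
  ∃ y, (∀ j ∈ S, f j y ≠ 0) ∧ C = connectedComponentIn {z | ∀ j ∈ S, f j z ≠ 0} y

/-- `C` is the cone `C⁺_X` of the vertex `X` with index set `S`: the unique connected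
component of `ℝ^k ∖ ⋃_{j ∈ S} H j` on which `f0 - f0 X` is everywhere positive. -/
def IsPosCone (f : Fin N → ((Fin k → ℝ) →ᵃ[ℝ] ℝ)) (f0 : (Fin k → ℝ) →ₗ[ℝ] ℝ)
    (S : Finset (Fin N)) (X : Fin k → ℝ) (C : Set (Fin k → ℝ)) : Prop :=
  IsConeComp f S C ∧ ∀ y ∈ C, f0 X < f0 y

/-- `C` is the cone `C⁻_X` of the vertex `X` with index set `S`: the unique connected
component of `ℝ^k ∖ ⋃_{j ∈ S} H j` on which `f0 - f0 X` is everywhere negative. -/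
def IsNegCone (f : Fin N → ((Fin k → ℝ) →ᵃ[ℝ] ℝ)) (f0 : (Fin k → ℝ) →ₗ[ℝ] ℝ)
    (S : Finset (Fin N)) (X : Fin k → ℝ) (C : Set (Fin k → ℝ)) : Prop :=
  IsConeComp f S C ∧ ∀ y ∈ C, f0 y < f0 X

/-- `Δ` is the domain `Δ_X` of the vertex `X`: the unique arrangement domain whose
closure contains `X` and on which `f0 - f0 X > 0`. -/
def IsDomOf (f : Fin N → ((Fin k → ℝ) →ᵃ[ℝ] ℝ)) (f0 : (Fin k → ℝ) →ₗ[ℝ] ℝ)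
    (X : Fin k → ℝ) (Δ : Set (Fin k → ℝ)) : Prop :=
  IsDomain f Δ ∧ X ∈ closure Δ ∧ ∀ y ∈ Δ, f0 X < f0 y

/-- `Δ` is the domain `Δ⁻_X` of the vertex `X`: the unique arrangement domain whose
closure contains `X` and on which `f0 - f0 X < 0`. -/
def IsNegDomOf (f : Fin N → ((Fin k → ℝ) →ᵃ[ℝ] ℝ)) (f0 : (Fin k → ℝ) →ₗ[ℝ] ℝ)
    (X : Fin k → ℝ) (Δ : Set (Fin k → ℝ)) : Prop :=
  IsDomain f Δ ∧ X ∈ closure Δ ∧ ∀ y ∈ Δ, f0 y < f0 X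

/-- `Δ` belongs to `𝒟⁺`: it is an arrangement domain on which `f0` is bounded
from below. -/
def MemDplus (f : Fin N → ((Fin k → ℝ) →ᵃ[ℝ] ℝ)) (f0 : (Fin k → ℝ) →ₗ[ℝ] ℝ)
    (Δ : Set (Fin k → ℝ)) : Prop :=
  IsDomain f Δ ∧ BddBelow (f0 '' Δ)

/-- `Δ` belongs to `𝒟⁻`: it is an arrangement domain on which `f0` is bounded
from above. -/
def MemDminus (f : Fin N → ((Fin k → ℝ) →ᵃ[ℝ] ℝ)) (f0 : (Fin k → ℝ) →ₗ[ℝ] ℝ)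
    (Δ : Set (Fin k → ℝ)) : Prop :=
  IsDomain f Δ ∧ BddAbove (f0 '' Δ)

/-- The set `W` (a hyperplane) separates `S` from `T`: they lie in different connected
components of the complement of `W`. -/
def Separates {α : Type*} [TopologicalSpace α] (W S T : Set α) : Prop :=
  ∃ x ∈ S, ∃ y ∈ T, S ⊆ connectedComponentIn Wᶜ x ∧ T ⊆ connectedComponentIn Wᶜ y ∧
    connectedComponentIn Wᶜ x ≠ connectedComponentIn Wᶜ y

/-- The index set of `ℋ(Δ, Δ')`, the set of hyperplanes separating `Δ` from `Δ'`. -/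
def SepSet (f : Fin N → ((Fin k → ℝ) →ᵃ[ℝ] ℝ)) (Δ Δ' : Set (Fin k → ℝ)) :
    Finset (Fin N) :=
  Finset.univ.filter fun j => Separates (Hyp f j) Δ Δ'

lemma integral_lineDeriv_zero (G D : (Fin k → ℝ) → ℂ) (e : Fin k → ℝ)
    (hG : Integrable G) (hD : Integrable D)
    (hc : ∀ x, Continuous fun t : ℝ => G (x + t • e))
    (hder : ∀ x, ∃ S : Set ℝ, S.Countable ∧ ∀ t ∉ S,
      HasDerivAt (fun t : ℝ => G (x + t • e)) (D (x + t • e)) t) :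
    ∫ x, D x = 0 := by
  have mp : MeasurePreserving (fun p : ℝ × (Fin k → ℝ) => (p.1, p.2 + p.1 • e))
      ((volume.restrict (Set.Ioc (0:ℝ) 1)).prod volume)
      ((volume.restrict (Set.Ioc (0:ℝ) 1)).prod volume) := by
    refine MeasurePreserving.skew_product (f := id) (g := fun t x => x + t • e)
      (MeasurePreserving.id _) (by fun_prop) ?_
    exact Eventually.of_forall fun t => (measurePreserving_add_right volume (t • e)).map_eq
  have hI : Integrable (fun p : ℝ × (Fin k → ℝ) => D (p.2 + p.1 • e))
      ((volume.restrict (Set.Ioc (0:ℝ) 1)).prod volume) := by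
    have h1 : Integrable (fun p : ℝ × (Fin k → ℝ) => D p.2)
      ((volume.restrict (Set.Ioc (0:ℝ) 1)).prod volume) := hD.comp_snd _
    exact mp.integrable_comp_of_integrable h1
  have hftc : ∀ᵐ x : Fin k → ℝ, G (x + (1:ℝ) • e) - G x
      = ∫ s in Set.Ioc (0:ℝ) 1, D (x + s • e) := by
    have := hI.prod_left_ae
    filter_upwards [this] with x hx
    obtain ⟨S, hS, hS'⟩ := hder x
    have h2 := MeasureTheory.integral_eq_of_hasDerivAt_off_countable_of_le
      (fun t : ℝ => G (x + t • e)) (fun t => D (x + t • e)) (zero_le_one (α := ℝ)) hS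
      (hc x).continuousOn (fun t ht => hS' t ht.2)
      ((intervalIntegrable_iff_integrableOn_Ioc_of_le zero_le_one).2 hx)
    rw [intervalIntegral.integral_of_le zero_le_one] at h2
    rw [h2]; simp
  have h3 : ∫ x, (G (x + (1:ℝ) • e) - G x) = 0 := by
    rw [integral_sub (hG.comp_add_right _) hG, integral_add_right_eq_self (μ := volume) G, sub_self]
  rw [integral_congr_ae hftc] at h3
  rw [← integral_integral_swap (f := fun s x => D (x + s • e)) hI] at h3
  simp only [integral_add_right_eq_self (μ := volume) D] at h3
  simpa using h3

lemma det_last (R : Fin k → ((Fin k → ℝ) →ₗ[ℝ] ℝ)) (i0 : Fin k)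
    (l : (Fin k → ℝ) →ₗ[ℝ] ℝ) (e : Fin k → ℝ) (h0 : R i0 e = 1)
    (hR : ∀ i, i ≠ i0 → R i e = 0) :
    (Matrix.of fun i c : Fin k => (Function.update R i0 l) i (Pi.single c 1)).det
      = l e * (Matrix.of fun i c : Fin k => R i (Pi.single c 1)).det := by
  set M := (Matrix.of fun i c : Fin k => R i (Pi.single c 1)) with hM
  have h1 : (Matrix.of fun i c : Fin k => (Function.update R i0 l) i (Pi.single c 1))
      = M.updateRow i0 (fun c => l (Pi.single c 1)) := by
    ext i c
    by_cases h : i = i0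
    · subst h; simp
    · simp [h, hM]
  have h2 : M = M.updateRow i0 (fun c => R i0 (Pi.single c 1)) := by
    ext i c
    by_cases h : i = i0
    · subst h; simp [hM]
    · simp [h, hM]
  have h3 : (M.updateRow i0 ((fun c => l (Pi.single c 1)) +
      (-(l e)) • (fun c => R i0 (Pi.single c 1)))).det = 0 := by
    rw [← Matrix.exists_mulVec_eq_zero_iff]
    refine ⟨e, ?_, ?_⟩
    · rintro rfl; simp at h0
    · have key : ∀ m : (Fin k → ℝ) →ₗ[ℝ] ℝ, ∑ c, m (Pi.single c 1) * e c = m e := by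
        intro m
        conv_rhs => rw [LinearMap.pi_apply_eq_sum_univ m e]
        refine Finset.sum_congr rfl fun c _ => ?_
        rw [smul_eq_mul, mul_comm]
        congr 2
        ext j
        simp [Pi.single_apply, eq_comm]
      ext i
      by_cases h : i = i0
      · subst h
        simp only [Matrix.mulVec, dotProduct, Matrix.updateRow_self, Pi.add_apply, Pi.smul_apply,
          smul_eq_mul, add_mul, Finset.sum_add_distrib, mul_assoc, ← Finset.mul_sum, key, h0]
        simp
      · simp only [Matrix.mulVec, dotProduct, Matrix.updateRow_ne h, hM, Matrix.of_apply, key,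
          hR i h]
        simp
  rw [Matrix.det_updateRow_add, Matrix.det_updateRow_smul, ← h2] at h3
  rw [h1]; linarith

lemma det_perm (l : Fin N → ((Fin k → ℝ) →ₗ[ℝ] ℝ)) (a b : Fin k → Fin N)
    (ha : Function.Injective a) (hab : Set.range a ⊆ Set.range b) :
    |(Matrix.of fun i c : Fin k => l (a i) (Pi.single c 1)).det|
      = |(Matrix.of fun i c : Fin k => l (b i) (Pi.single c 1)).det| := by
  have h : ∀ i, ∃ j, b j = a i := fun i => hab ⟨i, rfl⟩
  choose σ hσ using h
  have hinj : Function.Injective σ := fun i j hij => ha (by rw [← hσ, ← hσ, hij])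
  have hbij : Function.Bijective σ := Finite.injective_iff_bijective.1 hinj
  have : (Matrix.of fun i c : Fin k => l (a i) (Pi.single c 1)) =
    (Matrix.of fun i c : Fin k => l (b i) (Pi.single c 1)).submatrix (Equiv.ofBijective σ hbij) id := by
    ext i c
    simp [hσ]
  rw [this, Matrix.det_permute, abs_mul]
  rcases Int.units_eq_one_or (Equiv.Perm.sign (Equiv.ofBijective σ hbij)) with h | h <;> simp [h]

lemma aff_eq (g : (Fin k → ℝ) →ᵃ[ℝ] ℝ) (x v : Fin k → ℝ) : g (x + v) = g x + g.linear v := by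
  have := g.map_vadd x v
  simpa [add_comm] using this

lemma aff_cont (g : (Fin k → ℝ) →ᵃ[ℝ] ℝ) : Continuous g :=
  AffineMap.continuous_of_finiteDimensional g

lemma domain_eq (f : Fin N → ((Fin k → ℝ) →ᵃ[ℝ] ℝ)) (Δ : Set (Fin k → ℝ)) (h : IsDomain f Δ) :
    Δ.Nonempty ∧ ∃ s : Fin N → ℝ, (∀ j, |s j| = 1) ∧ Δ = {x | ∀ j, 0 < s j * f j x} := by
  obtain ⟨p, hp, rfl⟩ := h
  refine ⟨⟨p, mem_connectedComponentIn hp⟩, fun j => Real.sign (f j p), ?_, ?_⟩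
  · intro j
    rcases Real.sign_apply_eq_of_ne_zero _ (hp j) with h | h <;> simp [h]
  · apply Subset.antisymm
    · intro x hx j
      have hpre : IsPreconnected (f j '' connectedComponentIn (HypCompl f) p) :=
        isPreconnected_connectedComponentIn.image _ (aff_cont (f j)).continuousOn
      have h0 : (0:ℝ) ∉ f j '' connectedComponentIn (HypCompl f) p := by
        rintro ⟨y, hy, hy0⟩
        exact connectedComponentIn_subset _ _ hy j hy0
      have hpm : f j p ∈ f j '' connectedComponentIn (HypCompl f) p :=
        ⟨p, mem_connectedComponentIn hp, rfl⟩
      have hxm : f j x ∈ f j '' connectedComponentIn (HypCompl f) p := ⟨x, hx, rfl⟩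
      have hoc := hpre.ordConnected
      have hx0 : f j x ≠ 0 := connectedComponentIn_subset _ _ hx j
      change 0 < Real.sign (f j p) * f j x
      rcases lt_or_gt_of_ne (hp j) with h1 | h1
      · rw [Real.sign_of_neg h1]
        rcases lt_or_gt_of_ne hx0 with h2 | h2
        · linarith
        · exact absurd (hoc.out hpm hxm ⟨h1.le, h2.le⟩) h0
      · rw [Real.sign_of_pos h1]
        rcases lt_or_gt_of_ne hx0 with h2 | h2
        · exact absurd (hoc.out hxm hpm ⟨h2.le, h1.le⟩) h0
        · linarith
    · apply IsPreconnected.subset_connectedComponentIn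
      · apply Convex.isPreconnected
        rw [Set.ofPred_forall]
        refine convex_iInter fun j => ?_
        intro x hx y hy a b ha hb hab
        simp only [Set.mem_ofPred_eq] at hx hy ⊢
        have : f j (a • x + b • y) = a * f j x + b * f j y := by
          simpa using Convex.combo_affine_apply (f := f j) (x := x) (y := y) hab
        rw [this]
        have e : Real.sign (f j p) * (a * f j x + b * f j y)
          = a * (Real.sign (f j p) * f j x) + b * (Real.sign (f j p) * f j y) := by ring
        rw [e]
        rcases ha.eq_or_lt with h | h
        · have : b = 1 := by linarith
          subst this; subst h; simpa using hy
        · have := mul_pos h hx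
          have := mul_nonneg hb hy.le
          linarith
      · intro j
        change 0 < Real.sign (f j p) * f j p
        rcases lt_or_gt_of_ne (hp j) with h1 | h1
        · rw [Real.sign_of_neg h1]; linarith
        · rw [Real.sign_of_pos h1]; linarith
      · intro x hx j h0
        have := hx j
        simp [h0] at this

lemma eq_zero_of_card (f : Fin N → ((Fin k → ℝ) →ᵃ[ℝ] ℝ)) (hf : Generic f)
    (S : Finset (Fin N)) (hS : S.card = k) (v : Fin k → ℝ) (hv : ∀ j ∈ S, (f j).linear v = 0) :
    v = 0 := by
  obtain ⟨x, hx, hu⟩ := hf.2.1 S hS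
  have := hu (x + v) (fun j hj => by rw [aff_eq, hx j hj, hv j hj, add_zero])
  simpa using this

lemma cone_pos (hk : 1 ≤ k) (hkN : k ≤ N)
    (f : Fin N → ((Fin k → ℝ) →ᵃ[ℝ] ℝ)) (hf : Generic f)
    (f0 : (Fin k → ℝ) →ₗ[ℝ] ℝ) (hf0 : GenericLin f f0)
    (s : Fin N → ℝ) (hs : ∀ j, |s j| = 1) (p : Fin k → ℝ)
    (hp : ∀ j, 0 < s j * f j p) (m : ℝ) (hm : ∀ x, (∀ j, 0 < s j * f j x) → m ≤ f0 x)
    (v : Fin k → ℝ) (hv : ∀ j, 0 ≤ s j * (f j).linear v) (hv0 : v ≠ 0) : 0 < f0 v := by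
  have hnn : ∀ v, (∀ j, 0 ≤ s j * (f j).linear v) → 0 ≤ f0 v := by
    intro v hv
    by_contra hneg
    push Not at hneg
    obtain ⟨n, hn⟩ := exists_nat_gt ((f0 p - m) / (- f0 v))
    rw [div_lt_iff₀ (by linarith)] at hn
    have := hm (p + (n : ℝ) • v) (fun j => by
      rw [aff_eq, map_smul, smul_eq_mul, mul_add]
      have := mul_nonneg (Nat.cast_nonneg (α := ℝ) n) (hv j)
      have := hp j
      nlinarith)
    rw [map_add, map_smul, smul_eq_mul] at this
    linarith
  set Z : Finset (Fin N) := Finset.univ.filter fun j => (f j).linear v = 0 with hZ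
  have hZc : Z.card ≤ k - 1 := by
    by_contra h
    obtain ⟨S, hSZ, hS⟩ := Finset.exists_subset_card_eq (s := Z) (n := k) (by omega)
    exact hv0 (eq_zero_of_card f hf S hS v fun j hj => by simpa [hZ] using hSZ hj)
  obtain ⟨V, hZV, -, hV⟩ := Finset.exists_subsuperset_card_eq (Finset.subset_univ Z) hZc
    (by simp; omega)
  obtain ⟨x, y, hx, hy, hxy⟩ := hf0.2 V hV
  obtain ⟨w, hw, hw0⟩ : ∃ w, (∀ j ∈ V, (f j).linear w = 0) ∧ f0 w < 0 := by
    have hl : ∀ j ∈ V, (f j).linear (y - x) = 0 := by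
      intro j hj
      have := aff_eq (f j) x (y - x)
      rw [add_sub_cancel, hx j hj, hy j hj] at this
      linarith
    rcases lt_or_gt_of_ne hxy with h | h
    · refine ⟨-(y - x), fun j hj => by rw [map_neg, hl j hj, neg_zero], ?_⟩
      rw [map_neg, map_sub]; linarith
    · exact ⟨y - x, hl, by rw [map_sub]; linarith⟩
  have hev : ∀ᶠ t : ℝ in nhdsWithin 0 (Set.Ioi 0), ∀ j, 0 ≤ s j * (f j).linear (v + t • w) := by
    rw [eventually_all]
    intro j
    by_cases hj : j ∈ Z
    · refine Eventually.of_forall fun t => ?_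
      rw [map_add, map_smul, hw j (hZV hj)]
      simpa using hv j
    · have hlt : 0 < s j * (f j).linear v := by
        refine lt_of_le_of_ne (hv j) (Ne.symm (mul_ne_zero ?_ ?_))
        · intro h; have := hs j; simp [h] at this
        · simpa [hZ] using hj
      have hct : ContinuousAt (fun t : ℝ => s j * (f j).linear (v + t • w)) 0 := by
        simp only [map_add, map_smul, smul_eq_mul]
        fun_prop
      have := hct.eventually (lt_mem_nhds (a := 0) (by simpa using hlt))
      exact (this.filter_mono nhdsWithin_le_nhds).mono fun t ht => ht.le
  obtain ⟨t, ht, ht0⟩ := (hev.and self_mem_nhdsWithin).exists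
  have := hnn _ ht
  rw [map_add, map_smul, smul_eq_mul] at this
  have h2 : t * f0 w < 0 := mul_neg_of_pos_of_neg ht0 hw0
  linarith

lemma growth (hk : 1 ≤ k) (hkN : k ≤ N)
    (f : Fin N → ((Fin k → ℝ) →ᵃ[ℝ] ℝ)) (hf : Generic f)
    (f0 : (Fin k → ℝ) →ₗ[ℝ] ℝ) (hf0 : GenericLin f f0)
    (s : Fin N → ℝ) (hs : ∀ j, |s j| = 1) (p : Fin k → ℝ)
    (hp : ∀ j, 0 < s j * f j p) (m : ℝ) (hm : ∀ x, (∀ j, 0 < s j * f j x) → m ≤ f0 x) :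
    ∃ c > 0, ∃ C, ∀ x, (∀ j, 0 < s j * f j x) → c * ‖x‖ - C ≤ f0 x := by
  set φ : (Fin k → ℝ) → ℝ := fun v => max (f0 v) 0 + ∑ j, max (-(s j * (f j).linear v)) 0 with hφ
  have hlc : ∀ j, Continuous (f j).linear := fun j => LinearMap.continuous_of_finiteDimensional _
  have h0c : Continuous f0 := LinearMap.continuous_of_finiteDimensional _
  have hφc : Continuous φ := by
    refine (h0c.max continuous_const).add (continuous_finsetSum _ fun j _ => ?_)
    exact ((continuous_const.mul (hlc j)).neg).max continuous_const
  have hφp : ∀ v, v ≠ 0 → 0 < φ v := by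
    intro v hv
    have hsn : 0 ≤ ∑ j, max (-(s j * (f j).linear v)) 0 :=
      Finset.sum_nonneg fun j _ => le_max_right _ _
    by_cases h : ∀ j, 0 ≤ s j * (f j).linear v
    · have := cone_pos hk hkN f hf f0 hf0 s hs p hp m hm v h hv
      have := le_max_left (f0 v) 0
      simp only [hφ]; linarith
    · push Not at h
      obtain ⟨j, hj⟩ := h
      have h1 : max (-(s j * (f j).linear v)) 0 ≤ ∑ j, max (-(s j * (f j).linear v)) 0 :=
        Finset.single_le_sum (f := fun j => max (-(s j * (f j).linear v)) 0)
          (fun j _ => le_max_right _ _) (Finset.mem_univ j)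
      have := le_max_right (f0 v) 0
      have := le_max_left (-(s j * (f j).linear v)) 0
      simp only [hφ]; linarith
  have hhom : ∀ (t : ℝ) v, 0 ≤ t → φ (t • v) = t * φ v := by
    intro t v ht
    simp only [hφ, map_smul, smul_eq_mul, mul_add, Finset.mul_sum, mul_max_of_nonneg _ _ ht,
      mul_zero]
    congr 1
    refine Finset.sum_congr rfl fun j _ => ?_
    congr 1; ring
  have : Nonempty (Fin k) := ⟨⟨0, hk⟩⟩
  have hne : (Metric.sphere (0 : Fin k → ℝ) 1).Nonempty := by
    exact NormedSpace.sphere_nonempty.2 zero_le_one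
  obtain ⟨v0, hv0, hmin⟩ := (isCompact_sphere (0 : Fin k → ℝ) 1).exists_isMinOn hne hφc.continuousOn
  have hv0' : v0 ≠ 0 := by rintro rfl; simp at hv0
  have hlow : ∀ x, φ v0 * ‖x‖ ≤ φ x := by
    intro x
    by_cases hx : x = 0
    · subst hx; simp [hφ]
    · have hn : 0 < ‖x‖ := norm_pos_iff.2 hx
      have h1 : φ v0 ≤ φ (‖x‖⁻¹ • x) := hmin (by simp [norm_smul, hn.ne'])
      rw [hhom _ _ (by positivity)] at h1
      have := mul_le_mul_of_nonneg_right h1 hn.le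
      rwa [mul_right_comm, inv_mul_cancel₀ hn.ne', one_mul] at this
  refine ⟨φ v0, hφp v0 hv0', ∑ j, |f j 0| + |m|, fun x hx => ?_⟩
  have h1 := hlow x
  have h2 : ∑ j, max (-(s j * (f j).linear x)) 0 ≤ ∑ j, |f j 0| := by
    refine Finset.sum_le_sum fun j _ => max_le ?_ (abs_nonneg _)
    have h3 := hx j
    have h4 := aff_eq (f j) 0 x
    rw [zero_add] at h4
    rw [h4, mul_add] at h3
    have h5 := le_abs_self (s j * f j 0)
    rw [abs_mul, hs j, one_mul] at h5
    linarith
  have h3 : max (f0 x) 0 ≤ f0 x + |m| := by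
    have := hm x hx
    have := neg_abs_le m
    refine max_le (by linarith [abs_nonneg m]) (by linarith)
  simp only [hφ] at h1 ⊢
  linarith

lemma int_1d (a δ : ℝ) (ha : 0 < a) (hδ : 0 < δ) :
    Integrable (fun y : ℝ => |y| ^ (a - 1) * Real.exp (-(δ * |y|))) := by
  have h1 : IntegrableOn (fun y : ℝ => |y| ^ (a - 1) * Real.exp (-(δ * |y|))) (Ioi 0) := by
    refine (integrableOn_rpow_mul_exp_neg_mul_rpow (s := a - 1) (p := 1) (b := δ) (by linarith)
      one_pos hδ).congr_fun (fun y hy => ?_) measurableSet_Ioi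
    rw [mem_Ioi] at hy
    simp [abs_of_pos hy]
  have h2 : IntegrableOn (fun y : ℝ => |y| ^ (a - 1) * Real.exp (-(δ * |y|))) (Iic 0) := by
    rw [← Measure.map_neg_eq_self (volume : Measure ℝ)]
    let m : MeasurableEmbedding fun x : ℝ => -x := (Homeomorph.neg ℝ).measurableEmbedding
    rw [m.integrableOn_map_iff]
    simp_rw [Function.comp_def, abs_neg, neg_preimage, neg_Iic, neg_zero]
    exact Iff.mpr integrableOn_Ici_iff_integrableOn_Ioi h1
  have := h2.union h1
  rwa [Iic_union_Ioi, integrableOn_univ] at this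

lemma aff_lin_bound (g : (Fin k → ℝ) →ᵃ[ℝ] ℝ) : ∃ K > 0, ∀ x, |g x| ≤ K * (1 + ‖x‖) := by
  set L := LinearMap.toContinuousLinearMap g.linear with hL
  refine ⟨|g 0| + ‖L‖ + 1, by positivity, fun x => ?_⟩
  have h4 := aff_eq g 0 x
  rw [zero_add] at h4
  have h5 : |g.linear x| ≤ ‖L‖ * ‖x‖ := L.le_opNorm x
  have h6 := abs_add_le (g 0) (g.linear x)
  rw [h4]
  nlinarith [norm_nonneg x, norm_nonneg L, abs_nonneg (g 0), mul_nonneg (abs_nonneg (g 0)) (norm_nonneg x)]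

lemma aff_exp_bound (g : (Fin k → ℝ) →ᵃ[ℝ] ℝ) (η : ℝ) (hη : 0 < η) :
    ∃ M > 0, ∀ x, |g x| ≤ M * Real.exp (η * ‖x‖) := by
  obtain ⟨K, hK, h⟩ := aff_lin_bound g
  refine ⟨K * (1 + 1 / η), by positivity, fun x => (h x).trans ?_⟩
  rw [mul_assoc]
  refine mul_le_mul_of_nonneg_left ?_ hK.le
  have h1 := Real.add_one_le_exp (η * ‖x‖)
  have h2 : 0 ≤ η * ‖x‖ := by positivity
  have h3 : ‖x‖ = 1 / η * (η * ‖x‖) := by field_simp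
  have h4 : ‖x‖ ≤ 1 / η * Real.exp (η * ‖x‖) := by
    conv_lhs => rw [h3]
    exact mul_le_mul_of_nonneg_left (by linarith) (by positivity)
  linarith

lemma rpow_exp_bound (g : (Fin k → ℝ) →ᵃ[ℝ] ℝ) (a : ℝ) (ha : 0 < a) (η : ℝ) (hη : 0 < η) :
    ∃ M > 0, ∀ x, |g x| ^ a ≤ M * Real.exp (η * ‖x‖) := by
  obtain ⟨M, hM, h⟩ := aff_exp_bound g (η / a) (by positivity)
  refine ⟨M ^ a, by positivity, fun x => ?_⟩
  have := Real.rpow_le_rpow (abs_nonneg _) (h x) ha.le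
  rw [Real.mul_rpow hM.le (Real.exp_pos _).le, ← Real.exp_mul] at this
  convert this using 3
  field_simp

lemma prod_exp_bound (f : Fin N → ((Fin k → ℝ) →ᵃ[ℝ] ℝ)) (α : Fin N → ℝ) (hα : ∀ j, 0 < α j)
    (T : Finset (Fin N)) : ∀ η : ℝ, 0 < η →
    ∃ M > 0, ∀ x, ∏ j ∈ T, |f j x| ^ α j ≤ M * Real.exp (η * ‖x‖) := by
  induction T using Finset.induction_on with
  | empty =>
    intro η hη
    refine ⟨1, one_pos, fun x => ?_⟩
    simp only [Finset.prod_empty, one_mul]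
    exact Real.one_le_exp (by positivity)
  | insert r T hr ih =>
    intro η hη
    obtain ⟨M, hM, h⟩ := ih (η / 2) (by positivity)
    obtain ⟨M', hM', h'⟩ := rpow_exp_bound (f r) (α r) (hα r) (η / 2) (by positivity)
    refine ⟨M' * M, by positivity, fun x => ?_⟩
    rw [Finset.prod_insert hr]
    refine (mul_le_mul (h' x) (h x) (Finset.prod_nonneg fun j _ => by positivity)
      (by positivity)).trans (le_of_eq ?_)
    have : Real.exp (η * ‖x‖) = Real.exp (η / 2 * ‖x‖) * Real.exp (η / 2 * ‖x‖) := by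
      rw [← Real.exp_add]; ring_nf
    rw [this]; ring

lemma int_H (f : Fin N → ((Fin k → ℝ) →ᵃ[ℝ] ℝ)) (hf : Generic f)
    (α : Fin N → ℝ) (hα : ∀ j, 0 < α j) (X : Finset (Fin N)) (hX : X.card = k)
    (δ : ℝ) (hδ : 0 < δ) :
    Integrable (fun x => ∏ j ∈ X, (|f j x| ^ (α j - 1) * Real.exp (-(δ * |f j x|)))) := by
  set φ := X.orderIsoOfFin hX
  set L : (Fin k → ℝ) →ₗ[ℝ] (Fin k → ℝ) := LinearMap.pi fun i => (f (φ i)).linear with hL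
  have hinj : LinearMap.ker L = ⊥ := by
    rw [LinearMap.ker_eq_bot']
    intro v hv
    refine eq_zero_of_card f hf X hX v fun j hj => ?_
    have := congrFun hv (φ.symm ⟨j, hj⟩)
    simpa [hL] using this
  have hdet : LinearMap.det L ≠ 0 := by
    intro h
    exact absurd hinj (LinearMap.bot_lt_ker_of_det_eq_zero h).ne'
  have hF : Integrable (fun y : Fin k → ℝ =>
      ∏ i, (|y i| ^ (α (φ i) - 1) * Real.exp (-(δ * |y i|)))) :=
    Integrable.fintype_prod (f := fun (i : Fin k) (t : ℝ) =>
      |t| ^ (α (φ i) - 1) * Real.exp (-(δ * |t|))) (μ := fun _ => volume)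
      fun i => int_1d _ δ (hα _) hδ
  have hF2 := hF.comp_add_right (fun i => f (φ i) 0)
  have hmap := Measure.map_linearMap_addHaar_eq_smul_addHaar (volume : Measure (Fin k → ℝ)) hdet
  have hF3 := hF2.smul_measure (c := ENNReal.ofReal |(LinearMap.det L)⁻¹|) ENNReal.ofReal_ne_top
  rw [← hmap] at hF3
  have hF4 := hF3.comp_measurable
    (LinearMap.continuous_of_finiteDimensional L).measurable
  refine hF4.congr (Eventually.of_forall fun x => ?_)
  simp only [Function.comp, hL]
  rw [← Finset.prod_coe_sort X, ← φ.toEquiv.prod_comp]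
  refine Finset.prod_congr rfl fun i _ => ?_
  have h4 := aff_eq (f (φ i)) 0 x
  rw [zero_add] at h4
  simp [h4, add_comm]

lemma integ (f : Fin N → ((Fin k → ℝ) →ᵃ[ℝ] ℝ)) (hf : Generic f)
    (f0 : (Fin k → ℝ) →ₗ[ℝ] ℝ)
    (α : Fin N → ℝ) (hα : ∀ j, 0 < α j) (Δ : Set (Fin k → ℝ)) (hΔm : MeasurableSet Δ)
    (hne : ∀ x ∈ Δ, ∀ j, f j x ≠ 0) (c C : ℝ) (hc : 0 < c)
    (hgr : ∀ x ∈ Δ, c * ‖x‖ - C ≤ f0 x)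
    (X : Finset (Fin N)) (hX : X.card = k) (q : (Fin k → ℝ) →ᵃ[ℝ] ℝ)
    (lam : ℂ) (hlam : 0 < lam.re) :
    IntegrableOn (fun x => Complex.exp (-(lam * Complex.ofReal (f0 x))) *
        Complex.ofReal ((∏ j, |f j x| ^ α j) * (∏ j ∈ X, f j x)⁻¹ * q x)) Δ := by
  set b := lam.re * c with hb
  have hb0 : 0 < b := by positivity
  obtain ⟨M1, hM1, h1⟩ := prod_exp_bound f α hα Xᶜ (b / 4) (by positivity)
  obtain ⟨M2, hM2, h2⟩ := aff_exp_bound q (b / 4) (by positivity)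
  choose K hK hK' using fun j => aff_lin_bound (f j)
  set K0 := ∑ j ∈ X, K j + 1 with hK0
  have hK0p : 0 < K0 := by
    have : 0 ≤ ∑ j ∈ X, K j := Finset.sum_nonneg fun j _ => (hK j).le
    positivity
  set δ := b / 2 / K0 with hδ
  have hδ0 : 0 < δ := by positivity
  have hsum : ∀ x, ∑ j ∈ X, |f j x| ≤ K0 * (1 + ‖x‖) := by
    intro x
    calc ∑ j ∈ X, |f j x| ≤ ∑ j ∈ X, K j * (1 + ‖x‖) := Finset.sum_le_sum fun j _ => hK' j x
      _ = (∑ j ∈ X, K j) * (1 + ‖x‖) := by rw [Finset.sum_mul]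
      _ ≤ _ := mul_le_mul_of_nonneg_right (by linarith) (by positivity)
  have hexp : ∀ x, Real.exp (-(b / 2 * ‖x‖)) ≤
      Real.exp (b / 2) * ∏ j ∈ X, Real.exp (-(δ * |f j x|)) := by
    intro x
    rw [← Real.exp_sum, ← Real.exp_add, Real.exp_le_exp, Finset.sum_neg_distrib, ← Finset.mul_sum]
    have h3 := mul_le_mul_of_nonneg_left (hsum x) hδ0.le
    have h4 : δ * (K0 * (1 + ‖x‖)) = b / 2 * (1 + ‖x‖) := by rw [hδ]; field_simp
    linarith
  have hIntX := ((int_H f hf α hα X hX δ hδ0).const_mul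
    (Real.exp (lam.re * C) * M1 * M2 * Real.exp (b / 2))).integrableOn (s := Δ)
  refine Integrable.mono' hIntX ?_ ?_
  · have hfm : ∀ j, Measurable (f j) := fun j => (aff_cont (f j)).measurable
    have h0m : Measurable f0 := (LinearMap.continuous_of_finiteDimensional f0).measurable
    have hqm : Measurable q := (aff_cont q).measurable
    apply Measurable.aestronglyMeasurable
    fun_prop
  · refine (ae_restrict_iff' hΔm).2 (Eventually.of_forall fun x hx => ?_)
    rw [norm_mul, Complex.norm_exp, Complex.norm_real, Real.norm_eq_abs]
    have e1 : (-(lam * (f0 x : ℂ))).re = -(lam.re * f0 x) := by simp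
    rw [e1, abs_mul, abs_mul, abs_inv, Finset.abs_prod, Finset.abs_prod]
    have e2 : (∏ j, |(|f j x| ^ α j)|) * (∏ j ∈ X, |f j x|)⁻¹
        = (∏ j ∈ Xᶜ, |f j x| ^ α j) * ∏ j ∈ X, |f j x| ^ (α j - 1) := by
      rw [← Finset.prod_compl_mul_prod X, mul_assoc, ← Finset.prod_inv_distrib,
        ← Finset.prod_mul_distrib]
      congr 1
      · exact Finset.prod_congr rfl fun j _ => abs_of_nonneg (by positivity)
      · refine Finset.prod_congr rfl fun j _ => ?_
        rw [abs_of_nonneg (by positivity), Real.rpow_sub_one (abs_ne_zero.2 (hne x hx j)),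
          div_eq_mul_inv]
    rw [e2]
    have e3 : Real.exp (-(lam.re * f0 x)) ≤ Real.exp (lam.re * C) * Real.exp (-(b * ‖x‖)) := by
      rw [← Real.exp_add, Real.exp_le_exp]
      have := mul_le_mul_of_nonneg_left (hgr x hx) hlam.le
      rw [hb]; linarith
    have e4 : Real.exp (-(b * ‖x‖)) * Real.exp (b / 4 * ‖x‖) * Real.exp (b / 4 * ‖x‖)
        = Real.exp (-(b / 2 * ‖x‖)) := by
      rw [← Real.exp_add, ← Real.exp_add]; congr 1; ring
    set Q := ∏ j ∈ X, |f j x| ^ (α j - 1) with hQ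
    have hQ0 : 0 ≤ Q := Finset.prod_nonneg fun j _ => by positivity
    calc Real.exp (-(lam.re * f0 x)) * ((∏ j ∈ Xᶜ, |f j x| ^ α j) * Q * |q x|)
        ≤ (Real.exp (lam.re * C) * Real.exp (-(b * ‖x‖))) *
          ((M1 * Real.exp (b / 4 * ‖x‖)) * Q * (M2 * Real.exp (b / 4 * ‖x‖))) := by
          have := h1 x
          have := h2 x
          gcongr
      _ = Real.exp (lam.re * C) * M1 * M2 * Q *
          (Real.exp (-(b * ‖x‖)) * Real.exp (b / 4 * ‖x‖) * Real.exp (b / 4 * ‖x‖)) := by ring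
      _ = Real.exp (lam.re * C) * M1 * M2 * Q * Real.exp (-(b / 2 * ‖x‖)) := by rw [e4]
      _ ≤ Real.exp (lam.re * C) * M1 * M2 * Q *
          (Real.exp (b / 2) * ∏ j ∈ X, Real.exp (-(δ * |f j x|))) := by
          have := hexp x
          gcongr
      _ = _ := by rw [Finset.prod_mul_distrib]; ring

lemma det_rel (hk : 1 ≤ k) (f : Fin N → ((Fin k → ℝ) →ᵃ[ℝ] ℝ))
    (f0 : (Fin k → ℝ) →ₗ[ℝ] ℝ) (U : Finset (Fin N)) (hU : U.card = k - 1)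
    (eU : Fin k → ℝ) (heU : (∀ i ∈ U, (f i).linear eU = 0) ∧ f0 eU = 1)
    (r : Fin N) (hr : r ∉ U) (h : (insert r U).card = k) :
    |(Matrix.of fun i c : Fin k =>
        (f (((insert r U).orderIsoOfFin h i : (insert r U : Finset (Fin N))) :
          Fin N)).linear (Pi.single c 1)).det| = |(f r).linear eU| *
    |(Matrix.of fun i c : Fin k =>
      (if h : (i : ℕ) < k - 1 then (f ((U.orderIsoOfFin hU ⟨i, h⟩ : U) : Fin N)).linear
        else f0) (Pi.single c 1)).det| := by
  set R : Fin k → ((Fin k → ℝ) →ₗ[ℝ] ℝ) := fun i =>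
    if h : (i : ℕ) < k - 1 then (f ((U.orderIsoOfFin hU ⟨i, h⟩ : U) : Fin N)).linear else f0
    with hR
  set i0 : Fin k := ⟨k - 1, by omega⟩ with hi0
  have hlt : ∀ i : Fin k, i ≠ i0 → (i : ℕ) < k - 1 := by
    intro i hi
    have h1 := i.2
    have h2 : (i : ℕ) ≠ k - 1 := fun h => hi (Fin.ext h)
    omega
  have h1 := det_last R i0 (f r).linear eU (by simp [hR, hi0, heU.2]) (by
    intro i hi
    simp only [hR, dif_pos (hlt i hi)]
    exact heU.1 _ (Subtype.prop _))
  change _ = _ * |(Matrix.of fun i c : Fin k => R i (Pi.single c 1)).det|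
  rw [← abs_mul, ← h1]
  set b : Fin k → Fin N := fun i =>
    if h : (i : ℕ) < k - 1 then ((U.orderIsoOfFin hU ⟨i, h⟩ : U) : Fin N) else r with hb
  have hbu : (fun i => Function.update R i0 (f r).linear i) = fun i => (f (b i)).linear := by
    ext1 i
    by_cases hi : i = i0
    · subst hi; simp [hb, hi0]
    · simp [hi, hR, hb, hlt i hi]
  have hbu' : ∀ i, Function.update R i0 (f r).linear i = (f (b i)).linear := congrFun hbu
  simp only [hbu']
  refine det_perm (fun j => (f j).linear)
    (fun i => (((insert r U).orderIsoOfFin h i : (insert r U : Finset (Fin N))) : Fin N)) b ?_ ?_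
  · intro i j hij
    exact ((insert r U).orderIsoOfFin h).injective (Subtype.ext hij)
  · rintro _ ⟨i, rfl⟩
    have hm := ((insert r U).orderIsoOfFin h i).2
    rcases Finset.mem_insert.1 hm with h2 | h2
    · exact ⟨i0, by simp [hb, hi0, h2]⟩
    · set t := (U.orderIsoOfFin hU).symm ⟨_, h2⟩ with ht
      refine ⟨⟨t, by have := t.2; omega⟩, ?_⟩
      have h3 : b ⟨t, by have := t.2; omega⟩ = ((U.orderIsoOfFin hU t : U) : Fin N) := by
        simp only [hb]
        rw [dif_pos t.2]
      rw [h3, ht, OrderIso.apply_symm_apply]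

lemma hasDerivAt_abs_rpow (a l t : ℝ) (u : ℝ → ℝ) (hu : HasDerivAt u l t) (h0 : u t ≠ 0) :
    HasDerivAt (fun t => |u t| ^ a) (|u t| ^ a * (a * l / u t)) t := by
  have h1 := ((hasDerivAt_abs h0).comp t hu).rpow_const (p := a) (Or.inl (abs_ne_zero.2 h0))
  refine h1.congr_deriv ?_
  simp only [Function.comp]
  rw [Real.rpow_sub_one (abs_ne_zero.2 h0)]
  rcases lt_or_gt_of_ne h0 with h | h
  · rw [abs_of_neg h]; simp [h]; field_simp
  · rw [abs_of_pos h]; simp [h]; field_simp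

lemma hasDerivAt_prod (f : Fin N → ((Fin k → ℝ) →ᵃ[ℝ] ℝ)) (α : Fin N → ℝ) (x e : Fin k → ℝ)
    (t : ℝ) (h0 : ∀ j, f j (x + t • e) ≠ 0) :
    HasDerivAt (fun t : ℝ => ∏ j, |f j (x + t • e)| ^ α j)
      ((∏ j, |f j (x + t • e)| ^ α j) * ∑ j, α j * (f j).linear e / f j (x + t • e)) t := by
  have h1 : ∀ j ∈ Finset.univ, HasDerivAt (fun t : ℝ => |f j (x + t • e)| ^ α j)
      (|f j (x + t • e)| ^ α j * (α j * (f j).linear e / f j (x + t • e))) t := by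
    intro j _
    refine hasDerivAt_abs_rpow _ _ _ (fun t => f j (x + t • e)) ?_ (h0 j)
    have : (fun t : ℝ => f j (x + t • e)) = fun t => f j x + t * (f j).linear e := by
      ext t; rw [aff_eq, map_smul, smul_eq_mul]
    rw [this]
    simpa using ((hasDerivAt_id t).mul_const ((f j).linear e)).const_add (f j x)
  refine (HasDerivAt.fun_finsetProd h1).congr_deriv ?_
  rw [Finset.mul_sum]
  refine Finset.sum_congr rfl fun j hj => ?_
  rw [smul_eq_mul, ← mul_assoc, Finset.prod_erase_mul _ _ hj]

lemma stokes (f : Fin N → ((Fin k → ℝ) →ᵃ[ℝ] ℝ)) (hf : Generic f)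
    (f0 : (Fin k → ℝ) →ₗ[ℝ] ℝ) (α : Fin N → ℝ) (hα : ∀ j, 0 < α j)
    (Δ : Set (Fin k → ℝ)) (s : Fin N → ℝ) (hs : ∀ j, |s j| = 1)
    (hΔ : Δ = {x | ∀ j, 0 < s j * f j x})
    (c C : ℝ) (hc : 0 < c) (hgr : ∀ x ∈ Δ, c * ‖x‖ - C ≤ f0 x)
    (U : Finset (Fin N)) (hUc : ∀ r ∉ U, (insert r U).card = k) (hUne : ∃ r, r ∉ U)
    (e : Fin k → ℝ) (he : ∀ i ∈ U, (f i).linear e = 0) (he0 : f0 e = 1)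
    (lam : ℂ) (hlam : 0 < lam.re) :
    lam * ∫ x in Δ, Complex.exp (-(lam * Complex.ofReal (f0 x))) *
        Complex.ofReal ((∏ j, |f j x| ^ α j) * (∏ j ∈ U, f j x)⁻¹) =
    ∑ r ∈ Uᶜ, Complex.ofReal (α r * (f r).linear e) *
      ∫ x in Δ, Complex.exp (-(lam * Complex.ofReal (f0 x))) *
        Complex.ofReal ((∏ j, |f j x| ^ α j) * (∏ j ∈ insert r U, f j x)⁻¹) := by
  have hfc : ∀ j, Continuous (f j) := fun j => aff_cont (f j)
  have h0c : Continuous f0 := LinearMap.continuous_of_finiteDimensional f0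
  have hopen : IsOpen Δ := by
    rw [hΔ, Set.ofPred_forall]
    exact isOpen_iInter_of_finite fun j => isOpen_lt continuous_const (continuous_const.mul (hfc j))
  have hmem : ∀ x, x ∈ Δ ↔ ∀ j, 0 < s j * f j x := by intro x; rw [hΔ]; rfl
  have hne : ∀ x ∈ Δ, ∀ j, f j x ≠ 0 := by
    intro x hx j h0
    have := (hmem x).1 hx j
    simp [h0] at this
  have hΔm := hopen.measurableSet
  set g : (Fin k → ℝ) → ℂ := fun x => Complex.exp (-(lam * Complex.ofReal (f0 x))) *
        Complex.ofReal ((∏ j, |f j x| ^ α j) * (∏ j ∈ U, f j x)⁻¹) with hg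
  set gr : Fin N → (Fin k → ℝ) → ℂ := fun r x => Complex.exp (-(lam * Complex.ofReal (f0 x))) *
        Complex.ofReal ((∏ j, |f j x| ^ α j) * (∏ j ∈ insert r U, f j x)⁻¹) with hgr'
  have hgi : IntegrableOn g Δ := by
    obtain ⟨r, hr⟩ := hUne
    refine (integ f hf f0 α hα Δ hΔm hne c C hc hgr (insert r U) (hUc r hr) (f r) lam
      hlam).congr_fun (fun x hx => ?_) hΔm
    simp only [hg]
    congr 2
    rw [Finset.prod_insert hr, mul_assoc]
    congr 1
    have := hne x hx r
    rw [mul_inv]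
    field_simp
  have hgri : ∀ r ∈ Uᶜ, IntegrableOn (gr r) Δ := by
    intro r hr
    have := integ f hf f0 α hα Δ hΔm hne c C hc hgr (insert r U) (hUc r (by simpa using hr))
      (AffineMap.const ℝ _ 1) lam hlam
    simpa [hgr'] using this
  set d : (Fin k → ℝ) → ℂ := fun x =>
    -(lam * g x) + ∑ r ∈ Uᶜ, Complex.ofReal (α r * (f r).linear e) * gr r x with hd
  have hsi : IntegrableOn (fun x => ∑ r ∈ Uᶜ, Complex.ofReal (α r * (f r).linear e) * gr r x) Δ :=
    integrable_finsetSum _ fun r hr => (hgri r hr).const_mul _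
  have hdi : IntegrableOn d Δ := (hgi.const_mul lam).neg.add hsi
  have hfl : ∀ j x (t : ℝ), f j (x + t • e) = f j x + t * (f j).linear e := by
    intro j x t; rw [aff_eq, map_smul, smul_eq_mul]
  have hlr : ∀ r ∉ U, (f r).linear e ≠ 0 := by
    intro r hr h0
    have : e = 0 := eq_zero_of_card f hf (insert r U) (hUc r hr) e (by
      intro j hj
      rcases Finset.mem_insert.1 hj with rfl | hj
      · exact h0
      · exact he j hj)
    rw [this] at he0
    simp at he0
  have hUconst : ∀ x (t : ℝ), ∏ j ∈ U, f j (x + t • e) = ∏ j ∈ U, f j x := by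
    intro x t
    refine Finset.prod_congr rfl fun j hj => ?_
    rw [hfl, he j hj]; ring
  have hzero := integral_lineDeriv_zero (Δ.indicator g) (Δ.indicator d) e
    ((integrable_indicator_iff hΔm).2 hgi) ((integrable_indicator_iff hΔm).2 hdi) ?_ ?_
  · rw [integral_indicator hΔm] at hzero
    have h2 : ∫ x in Δ, d x = (∫ x in Δ, (-(lam * g x))) +
        ∫ x in Δ, ∑ r ∈ Uᶜ, Complex.ofReal (α r * (f r).linear e) * gr r x :=
      integral_add (hgi.const_mul lam).neg hsi
    rw [h2, integral_neg, integral_const_mul,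
      integral_finsetSum _ (fun r hr => (hgri r hr).const_mul _)] at hzero
    simp only [integral_const_mul] at hzero
    linear_combination -hzero
  · intro x
    have hcomp : (fun t : ℝ => Δ.indicator g (x + t • e)) =
        ((fun t : ℝ => x + t • e) ⁻¹' Δ).indicator (fun t : ℝ => g (x + t • e)) := rfl
    have hlc : Continuous fun t : ℝ => x + t • e := by fun_prop
    rw [hcomp]
    refine Continuous.indicator ?_ ?_
    · intro t ht
      have hfr := hlc.frontier_preimage_subset Δ ht
      have hcl : ∀ j, 0 ≤ s j * f j (x + t • e) := by
        intro j
        have hclosed : IsClosed {y | 0 ≤ s j * f j y} :=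
          isClosed_le continuous_const (continuous_const.mul (hfc j))
        have hsub : closure Δ ⊆ {y | 0 ≤ s j * f j y} :=
          closure_minimal (fun y hy => ((hmem y).1 hy j).le) hclosed
        exact hsub (frontier_subset_closure hfr)
      have hnot : x + t • e ∉ Δ := by
        have := hfr.2
        rwa [hopen.interior_eq] at this
      rw [hmem] at hnot
      push Not at hnot
      obtain ⟨j, hj⟩ := hnot
      have hj0 : f j (x + t • e) = 0 := by
        have h1 : s j * f j (x + t • e) = 0 := le_antisymm hj (hcl j)
        rcases mul_eq_zero.1 h1 with h | h
        · have := hs j; simp [h] at this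
        · exact h
      have : ∏ j, |f j (x + t • e)| ^ α j = 0 := by
        refine Finset.prod_eq_zero (Finset.mem_univ j) ?_
        rw [hj0, abs_zero, Real.zero_rpow (hα j).ne']
      simp only [hg]
      rw [this]; simp
    · simp only [hg, hUconst]
      have : Continuous fun t : ℝ => ∏ j, |f j (x + t • e)| ^ α j := by
        refine continuous_finsetProd _ fun j _ => ?_
        exact ((hfc j).comp hlc).abs.rpow_const fun t => Or.inr (hα j).le
      have h0l : Continuous fun t : ℝ => f0 (x + t • e) := h0c.comp hlc
      fun_prop
  · intro x
    by_cases hx : ∃ j ∈ U, f j x = 0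
    · obtain ⟨j, hj, hj0⟩ := hx
      have hnm : ∀ t : ℝ, x + t • e ∉ Δ := by
        intro t ht
        exact hne _ ht j (by rw [hfl, hj0, he j hj]; ring)
      refine ⟨∅, countable_empty, fun t _ => ?_⟩
      simp only [indicator_of_notMem (hnm _)]
      exact hasDerivAt_const t 0
    push Not at hx
    refine ⟨⋃ j ∈ Uᶜ, {t : ℝ | f j (x + t • e) = 0}, ?_, ?_⟩
    · refine Set.Countable.biUnion (Finset.countable_toSet _) fun j hj => ?_
      apply Set.Subsingleton.countable
      intro t ht t' ht'
      have hj' : j ∉ U := by simpa using hj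
      change f j (x + t • e) = 0 at ht
      change f j (x + t' • e) = 0 at ht'
      rw [hfl] at ht ht'
      exact mul_right_cancel₀ (hlr j hj') (by linarith)
    · intro t ht
      have hall : ∀ j, f j (x + t • e) ≠ 0 := by
        intro j
        by_cases hj : j ∈ U
        · rw [hfl, he j hj]; simpa using hx j hj
        · intro h0
          exact ht (mem_biUnion (x := j) (by simpa using hj) h0)
      have hlc : Continuous fun t : ℝ => x + t • e := by fun_prop
      by_cases hin : x + t • e ∈ Δ
      · have hev : ∀ᶠ t' in nhds t, x + t' • e ∈ Δ :=
          hlc.continuousAt.eventually (hopen.mem_nhds hin)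
        rw [indicator_of_mem hin]
        have hder : HasDerivAt (fun t : ℝ => g (x + t • e)) (d (x + t • e)) t := by
          have hp := (hasDerivAt_prod f α x e t hall).mul_const ((∏ j ∈ U, f j x)⁻¹)
          have hpc := hp.ofReal_comp
          have h0d : HasDerivAt (fun t : ℝ => f0 (x + t • e)) 1 t := by
            have : (fun t : ℝ => f0 (x + t • e)) = fun t => f0 x + t := by
              ext t; simp [he0]
            rw [this]
            exact (hasDerivAt_id t).const_add _
          have hexp := ((h0d.ofReal_comp.const_mul lam).neg).cexp
          have hmul := hexp.mul hpc
          simp only [hg, hUconst]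
          refine hmul.congr_deriv ?_
          have hsum : ∑ j, α j * (f j).linear e / f j (x + t • e)
              = ∑ j ∈ Uᶜ, α j * (f j).linear e / f j (x + t • e) := by
            symm
            refine Finset.sum_subset (Finset.subset_univ _) fun j _ hj => ?_
            rw [he j (by simpa using hj)]; simp
          have hgrx : ∀ r ∈ Uᶜ, Complex.ofReal (α r * (f r).linear e) * gr r (x + t • e)
              = g (x + t • e) * Complex.ofReal (α r * (f r).linear e / f r (x + t • e)) := by
            intro r hr
            simp only [hgr', hg]
            rw [Finset.prod_insert (by simpa using hr), mul_inv]
            push_cast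
            ring
          simp only [hd]
          rw [Finset.sum_congr rfl hgrx, ← Finset.mul_sum, hsum, ← Complex.ofReal_sum]
          simp only [hg, hUconst, Pi.neg_apply]
          push_cast
          ring
        refine hder.congr_of_eventuallyEq ?_
        filter_upwards [hev] with t' ht'
        rw [indicator_of_mem ht']
      · have hev : ∀ᶠ t' in nhds t, x + t' • e ∉ Δ := by
          have hin' := hin
          rw [hmem] at hin'
          push Not at hin'
          obtain ⟨j, hj⟩ := hin'
          have hsj : s j ≠ 0 := by intro h; have := hs j; simp [h] at this
          have hj' : s j * f j (x + t • e) < 0 :=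
            lt_of_le_of_ne hj (mul_ne_zero hsj (hall j))
          have hc' : Continuous fun t : ℝ => s j * f j (x + t • e) :=
            continuous_const.mul ((hfc j).comp hlc)
          filter_upwards [hc'.continuousAt.eventually (gt_mem_nhds hj')] with t' ht' hmem'
          exact absurd ((hmem _).1 hmem' j) (not_lt.2 ht'.le)
        rw [indicator_of_notMem hin]
        refine (hasDerivAt_const t (0 : ℂ)).congr_of_eventuallyEq ?_
        filter_upwards [hev] with t' ht'
        rw [indicator_of_notMem ht']

/-- the Stokes/cohomological relation
`λ ∫_Δ e^{-λ f0} (∏ |f j| ^ α j) |det(f0, l_{j_1},…,l_{j_{k-1}})| (∏_{j ∈ U} f j)⁻¹ =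
∑_{r ∉ U} sgn(l r (e_U)) α r I_{Δ, U ∪ {r}}(λ)`. -/
theorem stmt_18 {k N : ℕ} (hk : 1 ≤ k) (hkN : k ≤ N)
    (f : Fin N → ((Fin k → ℝ) →ᵃ[ℝ] ℝ)) (hf : Generic f)
    (f0 : (Fin k → ℝ) →ₗ[ℝ] ℝ) (hf0 : GenericLin f f0)
    (α : Fin N → ℝ) (hα : ∀ j, 0 < α j)
    (Δ : Set (Fin k → ℝ)) (hΔ : MemDplus f f0 Δ)
    (U : Finset (Fin N)) (hU : U.card = k - 1)
    (eU : Fin k → ℝ)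
    (heU : (∀ i ∈ U, (f i).linear eU = 0) ∧ f0 eU = 1)
    (lam : ℂ) (hlam : 0 < lam.re)
    (dAbs0 : ℝ)
    (hd0 : dAbs0 = |(Matrix.of fun i c : Fin k =>
      (if h : (i : ℕ) < k - 1 then (f ((U.orderIsoOfFin hU ⟨i, h⟩ : U) : Fin N)).linear
        else f0) (Pi.single c 1)).det|)
    (dAbs : Fin N → ℝ)
    (hd : ∀ r : Fin N, r ∉ U → ∀ h : (insert r U).card = k,
      dAbs r = |(Matrix.of fun i c : Fin k =>
        (f (((insert r U).orderIsoOfFin h i : (insert r U : Finset (Fin N))) :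
          Fin N)).linear (Pi.single c 1)).det|) :
    lam * ∫ x in Δ, Complex.exp (-(lam * Complex.ofReal (f0 x))) *
        Complex.ofReal ((∏ j, |f j x| ^ α j) * dAbs0 * (∏ j ∈ U, f j x)⁻¹) =
    ∑ r ∈ Uᶜ, Complex.ofReal (Real.sign ((f r).linear eU) * α r) *
      ∫ x in Δ, Complex.exp (-(lam * Complex.ofReal (f0 x))) *
        Complex.ofReal ((∏ j, |f j x| ^ α j) * dAbs r * (∏ j ∈ insert r U, f j x)⁻¹) := by
  obtain ⟨hdom, m, hm⟩ := hΔ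
  obtain ⟨⟨p, hp⟩, s, hs, hΔeq⟩ := domain_eq f Δ hdom
  have hmem : ∀ x, x ∈ Δ ↔ ∀ j, 0 < s j * f j x := by intro x; rw [hΔeq]; rfl
  obtain ⟨c, hc, C, hgr⟩ := growth hk hkN f hf f0 hf0 s hs p ((hmem p).1 hp) m
    (fun x hx => hm ⟨x, (hmem x).2 hx, rfl⟩)
  have hUc : ∀ r ∉ U, (insert r U).card = k := by
    intro r hr
    rw [Finset.card_insert_of_notMem hr, hU]; omega
  have hUne : ∃ r, r ∉ U := by
    by_contra h
    push Not at h
    have : U = Finset.univ := Finset.eq_univ_iff_forall.2 h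
    rw [this, Finset.card_univ, Fintype.card_fin] at hU
    omega
  have hst := stokes f hf f0 α hα Δ s hs hΔeq c C hc (fun x hx => hgr x ((hmem x).1 hx)) U hUc hUne
    eU heU.1 heU.2 lam hlam
  have hpull : ∀ (d : ℝ) (V : Finset (Fin N)),
      ∫ x in Δ, Complex.exp (-(lam * Complex.ofReal (f0 x))) *
        Complex.ofReal ((∏ j, |f j x| ^ α j) * d * (∏ j ∈ V, f j x)⁻¹) =
      Complex.ofReal d * ∫ x in Δ, Complex.exp (-(lam * Complex.ofReal (f0 x))) *
        Complex.ofReal ((∏ j, |f j x| ^ α j) * (∏ j ∈ V, f j x)⁻¹) := by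
    intro d V
    rw [← integral_const_mul]
    congr 1
    ext x
    push_cast
    ring
  rw [hpull, mul_left_comm, hst, Finset.mul_sum]
  refine Finset.sum_congr rfl fun r hr => ?_
  have hr' : r ∉ U := by simpa using hr
  rw [hpull, hd r hr' (hUc r hr'), det_rel hk f f0 U hU eU heU r hr' (hUc r hr'), ← hd0]
  have hsg : Real.sign ((f r).linear eU) * |(f r).linear eU| = (f r).linear eU := by
    rcases lt_trichotomy ((f r).linear eU) 0 with h | h | h
    · rw [Real.sign_of_neg h, abs_of_neg h]; ring
    · rw [h]; simp
    · rw [Real.sign_of_pos h, abs_of_pos h]; ring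
  conv_lhs => rw [← hsg]
  push_cast
  ring

end HypArr
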